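/- Let Γ be a discrete subgroup of SL₂(ℝ). For every ξ > 0 there is a constant C = C(Γ,ξ) > 0 such that for all Q > Q₁ > 10 and every θ′ ∈ ℝ: #{γ ∈ Γ : γ·i ≠ i, Q₁ ≤ ‖γ‖ < 2Q₁, |θ_γ − θ′| < 2ξ/Q²} ≤ C. -/

import Mathlib

/-!
The points `γ • i` with `‖γ‖` in a dyadic annulus around `Q₁` and angle in a window of width
`O(ξ / Q₁²)` all lie in a region of the hyperbolic plane whose diameter depends only on `ξ`: the
radial extent is bounded, and the circle of radius `ℓ` about `i` has circumference
`2π sinh ℓ ≍ ‖γ‖²`. Hence, after fixing one such element `γ₀`, every other one satisfies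
`‖γ₀⁻¹ γ‖² ≤ K(ξ)`, and a discrete subgroup contains only finitely many elements of bounded norm.

The quantitative step is the hyperbolic law of cosines: with `N = ‖g‖²`, `M = ‖h‖²`,
`R² = N² - 4`, `S² = M² - 4`,
`2 ‖g⁻¹ h‖² = N M - R S cos (θ_h - θ_g)`,
which comes from the polar coordinates `R e^{iθ_g}` for the entries of `g gᵀ` (`polar_coords`).
Then `N M - R S` is bounded because `N / M` is, and
`R S (1 - cos (θ_h - θ_g)) ≤ N M (θ_h - θ_g)² / 2 = O(ξ²)`.
-/

open Matrix MeasureTheory Real Filter Topology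
open scoped MatrixGroups Pointwise

noncomputable section

/-- `SL(2,ℝ)` as the special linear group of 2×2 real matrices. -/
abbrev SL2R := Matrix.SpecialLinearGroup (Fin 2) ℝ

instance : TopologicalSpace SL2R :=
  show TopologicalSpace {A : Matrix (Fin 2) (Fin 2) ℝ // A.det = 1} from inferInstance

instance : MeasurableSpace SL2R := borel SL2R

/-- Squared Frobenius norm `‖g‖² = a² + b² + c² + d²`. -/
def fnormSq (g : SL2R) : ℝ :=
  (g : Matrix (Fin 2) (Fin 2) ℝ) 0 0 ^ 2 + (g : Matrix (Fin 2) (Fin 2) ℝ) 0 1 ^ 2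
    + (g : Matrix (Fin 2) (Fin 2) ℝ) 1 0 ^ 2 + (g : Matrix (Fin 2) (Fin 2) ℝ) 1 1 ^ 2

/-- Frobenius norm `‖g‖`. -/
def fnorm (g : SL2R) : ℝ := Real.sqrt (fnormSq g)

/-- The angle `θ_g = arg((g·i − i)/(g·i + i)) ∈ (−π, π]`; equals `0` when `g·i = i`. -/
def theta (g : SL2R) : ℝ :=
  Complex.arg ((((g • UpperHalfPlane.I : UpperHalfPlane) : ℂ) - Complex.I)
    / (((g • UpperHalfPlane.I : UpperHalfPlane) : ℂ) + Complex.I))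

/-- Distance between two angles: the distance from `a − b` to the nearest element of `2πℤ`. -/
def angDist (a b : ℝ) : ℝ := |((a - b : ℝ) : Real.Angle).toReal|

/-- Inverse hyperbolic cosine. -/
def arccosh (x : ℝ) : ℝ := Real.log (x + Real.sqrt (x ^ 2 - 1))

/-- `ℓ(M) = arccosh(‖M‖²/2)`, the hyperbolic distance from `i` to `M·i`. -/
def ell (M : SL2R) : ℝ := arccosh (fnormSq M / 2)

/-- The pair-correlation density building block `f_ξ(ℓ)`. -/
def fxi (ξ l : ℝ) : ℝ :=
  if Real.sinh l ≤ ξ then 2 / ξ ^ 2 * l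
  else if 2 * Real.sinh (l / 2) ≤ ξ then
    2 / ξ ^ 2 * (l + Real.log (1 + ξ ^ 2)
      - 2 * Real.log (Real.cosh l + Real.sqrt (Real.sinh l ^ 2 - ξ ^ 2)))
  else 2 / ξ ^ 2 * (l - Real.log (Real.cosh l + Real.sqrt (Real.sinh l ^ 2 - ξ ^ 2)))

/-- The rotation matrix `k_φ ∈ SL(2,ℝ)`. -/
def kMat (φ : ℝ) : SL2R :=
  ⟨!![Real.cos (φ / 2), Real.sin (φ / 2); -Real.sin (φ / 2), Real.cos (φ / 2)], by
    rw [Matrix.det_fin_two_of]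
    linear_combination Real.sin_sq_add_cos_sq (φ / 2)⟩

/-- The diagonal matrix `a_t ∈ SL(2,ℝ)`. -/
def aMat (t : ℝ) : SL2R :=
  ⟨!![Real.exp (t / 2), 0; 0, Real.exp (-t / 2)], by
    rw [Matrix.det_fin_two_of, ← Real.exp_add]
    norm_num
    ring⟩

/-- The entries of `g gᵀ` in polar coordinates: the angle is `θ_g` and the radius is
`2 sinh ℓ(g)`. If `g` fixes `i` then `R = 0`, so the value of `θ_g` is immaterial. -/
lemma polar_coords (g : SL2R) : ∃ R : ℝ, 0 ≤ R ∧ R ^ 2 = fnormSq g ^ 2 - 4 ∧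
    R * Real.cos (theta g) = g 0 0 ^ 2 + g 0 1 ^ 2 - g 1 0 ^ 2 - g 1 1 ^ 2 ∧
    R * Real.sin (theta g) = -2 * (g 0 0 * g 1 0 + g 0 1 * g 1 1) := by
  have hdet : g 0 0 * g 1 1 - g 0 1 * g 1 0 = 1 := by
    have := g.det_coe
    rwa [Matrix.det_fin_two] at this
  have hN : fnormSq g = g 0 0 ^ 2 + g 0 1 ^ 2 + g 1 0 ^ 2 + g 1 1 ^ 2 := rfl
  have hNpos : 0 < fnormSq g + 2 := by rw [hN]; positivity
  set P : ℂ := ⟨g 0 0 ^ 2 + g 0 1 ^ 2 - g 1 0 ^ 2 - g 1 1 ^ 2,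
    -2 * (g 0 0 * g 1 0 + g 0 1 * g 1 1)⟩ with hP
  have hθ : theta g = Complex.arg P := by
    rw [← Complex.arg_real_mul P (inv_pos.mpr hNpos), theta]
    congr 1
    rw [UpperHalfPlane.coe_specialLinearGroup_apply]
    simp only [Algebra.algebraMap_self, RingHom.id_apply, UpperHalfPlane.coe_I]
    have hPc : P = ((g 0 0 : ℂ) ^ 2 + (g 0 1 : ℂ) ^ 2 - (g 1 0 : ℂ) ^ 2 - (g 1 1 : ℂ) ^ 2)
        + (-2 * ((g 0 0 : ℂ) * g 1 0 + (g 0 1 : ℂ) * g 1 1)) * Complex.I := by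
      apply Complex.ext <;> simp [hP, ← Complex.ofReal_pow]
    have hNc : ((fnormSq g + 2 : ℝ) : ℂ)
        = (g 0 0 : ℂ) ^ 2 + (g 0 1 : ℂ) ^ 2 + (g 1 0 : ℂ) ^ 2 + (g 1 1 : ℂ) ^ 2 + 2 := by
      rw [hN]; push_cast; ring
    have hNc0 : ((fnormSq g + 2 : ℝ) : ℂ) ≠ 0 := by exact_mod_cast hNpos.ne'
    have hdc : (g 0 0 : ℂ) * g 1 1 - (g 0 1 : ℂ) * g 1 0 = 1 := by exact_mod_cast hdet
    rw [Complex.ofReal_inv]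
    have hz : (g 1 0 : ℂ) * Complex.I + g 1 1 ≠ 0 := by
      intro h0
      have hc : g 1 0 = 0 := by simpa using congrArg Complex.im h0
      have hd : g 1 1 = 0 := by simpa using congrArg Complex.re h0
      simp [hc, hd] at hdet
    rw [hNc] at hNc0 ⊢
    rw [hPc]
    clear hPc hNc hP
    generalize (g 0 0 : ℂ) = a at *
    generalize (g 0 1 : ℂ) = b at *
    generalize (g 1 0 : ℂ) = c at *
    generalize (g 1 1 : ℂ) = d at *
    -- `(z - i) / (z + i) = u / v` with `v * conj v = ‖g‖² + 2`; `v'` stands for `conj v`.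
    set u : ℂ := (b + c) + (a - d) * Complex.I with hu
    set v : ℂ := (b - c) + (a + d) * Complex.I with hv
    set v' : ℂ := (b - c) - (a + d) * Complex.I with hv'
    have hvv : a ^ 2 + b ^ 2 + c ^ 2 + d ^ 2 + 2 = v * v' := by
      rw [hv, hv']
      linear_combination (a + d) ^ 2 * Complex.I_sq - 2 * hdc
    have huv : a ^ 2 + b ^ 2 - c ^ 2 - d ^ 2 + -2 * (a * c + b * d) * Complex.I = u * v' := by
      rw [hu, hv']
      linear_combination (a ^ 2 - d ^ 2) * Complex.I_sq
    have h1 : (a * Complex.I + b) / (c * Complex.I + d) - Complex.I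
        = u / (c * Complex.I + d) := by
      rw [eq_div_iff hz, sub_mul, div_mul_cancel₀ _ hz, hu]
      linear_combination (-c) * Complex.I_sq
    have h2 : (a * Complex.I + b) / (c * Complex.I + d) + Complex.I
        = v / (c * Complex.I + d) := by
      rw [eq_div_iff hz, add_mul, div_mul_cancel₀ _ hz, hv]
      linear_combination c * Complex.I_sq
    rw [hvv] at hNc0 ⊢
    have hv0 : v ≠ 0 := left_ne_zero_of_mul hNc0
    have hv0' : v' ≠ 0 := right_ne_zero_of_mul hNc0
    rw [huv, h1, h2]
    clear_value u v v'
    field_simp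
  refine ⟨‖P‖, norm_nonneg _, ?_, ?_, ?_⟩
  · rw [Complex.sq_norm, Complex.normSq_apply, hN]
    simp only [hP]
    linear_combination (-4 * (g 0 0 * g 1 1 - g 0 1 * g 1 0 + 1)) * hdet
  · rw [hθ, Complex.norm_mul_cos_arg]
  · rw [hθ, Complex.norm_mul_sin_arg]

lemma fnormSq_inv_mul (g h : SL2R) : fnormSq (g⁻¹ * h) =
    (g 1 0 ^ 2 + g 1 1 ^ 2) * (h 0 0 ^ 2 + h 0 1 ^ 2)
    + (g 0 0 ^ 2 + g 0 1 ^ 2) * (h 1 0 ^ 2 + h 1 1 ^ 2)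
    - 2 * (g 0 0 * g 1 0 + g 0 1 * g 1 1) * (h 0 0 * h 1 0 + h 0 1 * h 1 1) := by
  simp only [fnormSq, Matrix.SpecialLinearGroup.coe_mul, Matrix.SpecialLinearGroup.coe_inv,
    Matrix.adjugate_fin_two, Matrix.mul_apply, Fin.sum_univ_two, Matrix.of_apply,
    Matrix.cons_val_zero, Matrix.cons_val_one, Matrix.cons_val', Matrix.cons_val_fin_one]
  ring

/-- The hyperbolic law of cosines for the triangle with vertices `i`, `g • i`, `h • i`. -/
lemma law_of_cosines (g h : SL2R) : ∃ R S : ℝ, 0 ≤ R ∧ 0 ≤ S ∧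
    R ^ 2 = fnormSq g ^ 2 - 4 ∧ S ^ 2 = fnormSq h ^ 2 - 4 ∧
    2 * fnormSq (g⁻¹ * h)
      = fnormSq g * fnormSq h - R * S * Real.cos (theta h - theta g) := by
  obtain ⟨R, hR, hR2, hRc, hRs⟩ := polar_coords g
  obtain ⟨S, hS, hS2, hSc, hSs⟩ := polar_coords h
  refine ⟨R, S, hR, hS, hR2, hS2, ?_⟩
  have e : R * S * Real.cos (theta h - theta g)
      = (R * Real.cos (theta g)) * (S * Real.cos (theta h))
        + (R * Real.sin (theta g)) * (S * Real.sin (theta h)) := by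
    rw [Real.cos_sub]; ring
  rw [e, hRc, hSc, hRs, hSs, fnormSq_inv_mul, fnormSq, fnormSq]
  ring

lemma cos_sub_lower {a b t ε : ℝ} (ha : angDist a t < ε) (hb : angDist b t < ε) :
    1 - 2 * ε ^ 2 ≤ Real.cos (b - a) := by
  unfold angDist at ha hb
  set x := ((a - t : ℝ) : Real.Angle).toReal with hx
  set y := ((b - t : ℝ) : Real.Angle).toReal with hy
  have e : Real.cos (b - a) = Real.cos (y - x) := by
    rw [← Real.Angle.cos_coe, ← Real.Angle.cos_coe]
    congr 1
    rw [Real.Angle.coe_sub y x, hx, hy, Real.Angle.coe_toReal, Real.Angle.coe_toReal,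
      ← Real.Angle.coe_sub]
    congr 1
    ring
  rw [e]
  have h1 := Real.one_sub_sq_div_two_le_cos (x := y - x)
  have h2 : |y - x| ≤ 2 * ε := by
    have := abs_sub y x
    linarith
  have h3 : (y - x) ^ 2 ≤ (2 * ε) ^ 2 := by
    rw [← sq_abs (y - x)]
    gcongr
  linarith

/-- Two elements of the same dyadic annulus and the same angular window differ by an element
whose norm is bounded in terms of `ξ` alone. -/
lemma fnormSq_inv_mul_le {ξ Q Q₁ t : ℝ} (hξ : 0 < ξ) (h10 : 10 < Q₁) (hQ : Q₁ < Q) {g h : SL2R}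
    (hg1 : Q₁ ≤ fnorm g) (hg2 : fnorm g < 2 * Q₁)
    (hg3 : angDist (theta g) t < 2 * ξ / Q ^ 2)
    (hh1 : Q₁ ≤ fnorm h) (hh2 : fnorm h < 2 * Q₁)
    (hh3 : angDist (theta h) t < 2 * ξ / Q ^ 2) :
    fnormSq (g⁻¹ * h) ≤ 32 + 64 * ξ ^ 2 := by
  have hsq : ∀ k : SL2R, Q₁ ≤ fnorm k → fnorm k < 2 * Q₁ →
      Q₁ ^ 2 ≤ fnormSq k ∧ fnormSq k ≤ 4 * Q₁ ^ 2 := by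
    intro k h1 h2
    have hk : fnorm k ^ 2 = fnormSq k := Real.sq_sqrt (by unfold fnormSq; positivity)
    constructor <;> nlinarith
  obtain ⟨hN1, hN2⟩ := hsq g hg1 hg2
  obtain ⟨hM1, hM2⟩ := hsq h hh1 hh2
  obtain ⟨R, S, hR, hS, hR2, hS2, hlaw⟩ := law_of_cosines g h
  have hcos := cos_sub_lower hg3 hh3
  set N := fnormSq g
  set M := fnormSq h
  set c := Real.cos (theta h - theta g)
  set q := Q₁ ^ 2 with hq
  have hq0 : 100 < q := by nlinarith
  have hqQ : q ≤ Q ^ 2 := by rw [hq]; gcongr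
  have hRN : R ≤ N := by nlinarith
  have hSM : S ≤ M := by nlinarith
  have hRS : R * S ≤ N * M := mul_le_mul hRN hSM hS (by linarith)
  have hNM : N * M ≤ 16 * q ^ 2 := by nlinarith
  have hNM' : q ^ 2 ≤ N * M := by nlinarith
  -- `N M - R S = (4 N² + 4 M² - 16) / (N M + R S)`, where `N, M ≍ q`.
  have hdiff : N * M - R * S ≤ 64 := by
    have h1 : (N * M) ^ 2 - (R * S) ^ 2 = 4 * N ^ 2 + 4 * M ^ 2 - 16 := by
      rw [mul_pow R, hR2, hS2]; ring
    have hRS0 : 0 ≤ R * S := mul_nonneg hR hS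
    by_contra! hcon
    nlinarith [mul_nonneg (by linarith : (0:ℝ) ≤ N - q) (by linarith : (0:ℝ) ≤ 4 * q - N),
      mul_nonneg (by linarith : (0:ℝ) ≤ M - q) (by linarith : (0:ℝ) ≤ 4 * q - M)]
  have hε : (2 * ξ / Q ^ 2) ^ 2 ≤ 4 * ξ ^ 2 / q ^ 2 := by
    rw [div_pow, mul_pow]
    norm_num
    gcongr
  have hang : R * S * (1 - c) ≤ 128 * ξ ^ 2 := by
    have h1 : 1 - c ≤ 8 * ξ ^ 2 / q ^ 2 := by
      have : 8 * ξ ^ 2 / q ^ 2 = 2 * (4 * ξ ^ 2 / q ^ 2) := by ring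
      linarith
    calc R * S * (1 - c) ≤ (16 * q ^ 2) * (8 * ξ ^ 2 / q ^ 2) :=
          mul_le_mul (hRS.trans hNM) h1 (by linarith [Real.cos_le_one (theta h - theta g)])
            (by positivity)
      _ = 128 * ξ ^ 2 := by field_simp; norm_num
  linarith

/-- A discrete subgroup of `SL₂(ℝ)` is closed, and norm balls of `SL₂(ℝ)` are relatively
compact. -/
lemma finite_fnormSq_le (Γ : Subgroup SL2R) (hdisc : DiscreteTopology Γ) (K : ℝ) :
    {γ : Γ | fnormSq (γ : SL2R) ≤ K}.Finite := by
  have : IsTopologicalGroup SL2R := Matrix.SpecialLinearGroup.topologicalGroup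
  have : T2Space SL2R :=
    (Matrix.SpecialLinearGroup.isClosedEmbedding_val (n := Fin 2) (R := ℝ)).isEmbedding.t2Space
  have hcl : IsClosedEmbedding ((↑) : SL2R → Matrix (Fin 2) (Fin 2) ℝ) :=
    Matrix.SpecialLinearGroup.isClosedEmbedding_val
  have hbox : IsCompact {A : Matrix (Fin 2) (Fin 2) ℝ |
      ∀ i, A i ∈ {v : Fin 2 → ℝ | ∀ j, v j ∈ Set.Icc (-Real.sqrt K) (Real.sqrt K)}} :=
    isCompact_pi_infinite fun _ => isCompact_pi_infinite fun _ => isCompact_Icc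
  have hcpt := hcl.isCompact_preimage hbox
  have ht := Γ.tendsto_coe_cofinite_of_discrete (isDiscrete_iff_discreteTopology.mpr hdisc)
  have hfin := Filter.mem_cofinite.mp (Filter.mem_map.mp (ht hcpt.compl_mem_cocompact))
  refine hfin.subset fun γ hγ hmem => hmem fun i j => abs_le.mp ?_
  change fnormSq (γ : SL2R) ≤ K at hγ
  rw [fnormSq] at hγ
  apply Real.abs_le_sqrt
  fin_cases i <;> fin_cases j <;> simp <;> nlinarith [sq_nonneg ((γ : SL2R) 0 0),
    sq_nonneg ((γ : SL2R) 0 1), sq_nonneg ((γ : SL2R) 1 0), sq_nonneg ((γ : SL2R) 1 1)]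

/-- Lemma 5.1: at most boundedly many lattice points in a dyadic annulus
within a narrow angular window. -/
theorem annulus_angle_count_bound (Γ : Subgroup SL2R) (hdisc : DiscreteTopology Γ) :
    ∀ ξ : ℝ, 0 < ξ → ∃ C > (0:ℝ), ∀ Q Q₁ : ℝ, 10 < Q₁ → Q₁ < Q → ∀ θ' : ℝ,
      (Nat.card {γ : Γ //
          (γ : SL2R) • UpperHalfPlane.I ≠ UpperHalfPlane.I ∧
          Q₁ ≤ fnorm (γ : SL2R) ∧ fnorm (γ : SL2R) < 2 * Q₁ ∧
          angDist (theta (γ : SL2R)) θ' < 2 * ξ / Q ^ 2} : ℝ)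
        ≤ C := by
  intro ξ hξ
  set B : Set Γ := {γ : Γ | fnormSq (γ : SL2R) ≤ 32 + 64 * ξ ^ 2}
  have : Finite B := finite_fnormSq_le Γ hdisc _
  refine ⟨Nat.card B + 1, by positivity, fun Q Q₁ h10 hQ θ' => ?_⟩
  set T := {γ : Γ //
    (γ : SL2R) • UpperHalfPlane.I ≠ UpperHalfPlane.I ∧
    Q₁ ≤ fnorm (γ : SL2R) ∧ fnorm (γ : SL2R) < 2 * Q₁ ∧
    angDist (theta (γ : SL2R)) θ' < 2 * ξ / Q ^ 2}
  rcases isEmpty_or_nonempty T with hT | ⟨⟨γ₀, -, h1, h2, h3⟩⟩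
  · rw [Nat.card_of_isEmpty, Nat.cast_zero]
    positivity
  · let f : T → B := fun γ => ⟨γ₀⁻¹ * γ.1,
      fnormSq_inv_mul_le hξ h10 hQ h1 h2 h3 γ.2.2.1 γ.2.2.2.1 γ.2.2.2.2⟩
    have hf : Function.Injective f := fun a b hab =>
      Subtype.ext (mul_left_cancel (congrArg Subtype.val hab))
    have := Nat.card_le_card_of_injective f hf
    have : (Nat.card T : ℝ) ≤ Nat.card B := by exact_mod_cast this
    linarith
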